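/- arXiv:2008.02273 — 3 statements merged into one kernel-verified Lean document; each statement's English description precedes it below -/
import Mathlib

section
/- Non-degenerate behaviours are not necessarily non-disturbing. Precisely: let O be a finite set, let X = {a,b,c,d} with contexts C = {a,b,c} and D = {b,c,d}, let p_a, p_b, p_c, p_d be probability distributions on O, and let f, g : O × O → [0,1] be two distinct couplings of the pair (p_b, p_c). Define a behaviour p by p^C(s) = p_a(s(a))·f(s(b), s(c)) for s ∈ O^C and p^D(t) = g(t(b), t(c))·p_d(t(d)) for t ∈ O^D. Then p is a behaviour (each p^C, p^D is a probability distribution), p is non-degenerate (in particular p^C_b = p_b = p^D_b and p^C_c = p_c = p^D_c), and p is disturbing: p^C_{C∩D} = f ≠ g = p^D_{C∩D}. -/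
def IsDist {α : Type} [Fintype α] (f : α → ℝ) : Prop :=
  (∀ a, 0 ≤ f a) ∧ ∑ a, f a = 1

def coordMarg {O I : Type} [Fintype O] [DecidableEq O] [Fintype I] [DecidableEq I]
    (q : (I → O) → ℝ) (i : I) : O → ℝ :=
  fun o => ∑ v : I → O, if v i = o then q v else 0

def margAlong {O I J : Type} [Fintype O] [DecidableEq O] [Fintype I] [DecidableEq I] [Fintype J]
    (e : J → I) (q : (I → O) → ℝ) : (J → O) → ℝ :=
  fun t => ∑ v : I → O, if ∀ j, v (e j) = t j then q v else 0

def diagWeight {O J : Type} [Fintype O] [Fintype J] (q : (J → O) → ℝ) : ℝ :=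
  ∑ o : O, q (fun _ => o)

def IsCoupling {O J : Type} [Fintype O] [DecidableEq O] [Fintype J] [DecidableEq J]
    (q : (J → O) → ℝ) (r : J → O → ℝ) : Prop :=
  IsDist q ∧ ∀ j : J, coordMarg q j = r j

def IsMaxCoupling {O J : Type} [Fintype O] [DecidableEq O] [Fintype J] [DecidableEq J]
    (q : (J → O) → ℝ) (r : J → O → ℝ) : Prop :=
  IsCoupling q r ∧ ∀ q' : (J → O) → ℝ, IsCoupling q' r → diagWeight q' ≤ diagWeight q

def marg {X O : Type} [DecidableEq X] [Fintype O] [DecidableEq O] (E E' : Finset X)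
    (h : E' ⊆ E) (f : (↥E → O) → ℝ) : (↥E' → O) → ℝ :=
  margAlong (fun x : ↥E' => (⟨x.1, h x.2⟩ : ↥E)) f

def Cx {X : Type} [DecidableEq X] (𝒞 : Finset (Finset X)) (x : X) : Finset (Finset X) :=
  𝒞.filter (fun C => x ∈ C)

abbrev XT {X : Type} [DecidableEq X] (𝒞 : Finset (Finset X)) : Type :=
  {i : X × Finset X // i.2 ∈ 𝒞 ∧ i.1 ∈ i.2}

def eC {X : Type} [DecidableEq X] (𝒞 : Finset (Finset X)) (C : Finset X) (hC : C ∈ 𝒞) :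
    ↥C → XT 𝒞 :=
  fun x => ⟨(x.1, C), hC, x.2⟩

def eT {X : Type} [DecidableEq X] (𝒞 : Finset (Finset X)) (x : X) : ↥(Cx 𝒞 x) → XT 𝒞 :=
  fun C => ⟨(x, C.1), (Finset.mem_filter.mp C.2).1, (Finset.mem_filter.mp C.2).2⟩

def famAt {X O : Type} [DecidableEq X] [Fintype O] [DecidableEq O]
    (𝒞 : Finset (Finset X)) (p : ∀ C : Finset X, (↥C → O) → ℝ) (x : X) :
    ↥(Cx 𝒞 x) → O → ℝ :=
  fun C => coordMarg (p C.1) ⟨x, (Finset.mem_filter.mp C.2).2⟩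

def IsGlobalSection {X O : Type} [Fintype X] [DecidableEq X] [Fintype O] [DecidableEq O]
    (𝒞 : Finset (Finset X)) (p : ∀ C : Finset X, (↥C → O) → ℝ) (q : (X → O) → ℝ) : Prop :=
  IsDist q ∧ ∀ C ∈ 𝒞, p C = margAlong (fun x : ↥C => (x : X)) q

def NonDeg {X O : Type} [DecidableEq X] [Fintype O] [DecidableEq O]
    (𝒞 : Finset (Finset X)) (p : ∀ C : Finset X, (↥C → O) → ℝ) : Prop :=
  ∀ (x : X) (C D : Finset X), C ∈ 𝒞 → D ∈ 𝒞 → ∀ (hxC : x ∈ C) (hxD : x ∈ D),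
    coordMarg (p C) ⟨x, hxC⟩ = coordMarg (p D) ⟨x, hxD⟩

def ExtNC {X O : Type} [Fintype X] [DecidableEq X] [Fintype O] [DecidableEq O]
    (𝒞 : Finset (Finset X)) (p : ∀ C : Finset X, (↥C → O) → ℝ) : Prop :=
  ∃ q : (XT 𝒞 → O) → ℝ,
    IsCoupling q (fun i : XT 𝒞 => coordMarg (p i.1.2) ⟨i.1.1, i.2.2⟩) ∧
    (∀ (C : Finset X) (hC : C ∈ 𝒞), margAlong (eC 𝒞 C hC) q = p C) ∧
    (∀ x : X, IsMaxCoupling (margAlong (eT 𝒞 x) q) (famAt 𝒞 p x))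

open scoped Classical in
noncomputable def trivExt {X O : Type} [Fintype X] [DecidableEq X] [Fintype O] [DecidableEq O]
    (𝒞 : Finset (Finset X)) (q : (X → O) → ℝ) : (XT 𝒞 → O) → ℝ :=
  fun v => if h : ∃ u : X → O, ∀ i : XT 𝒞, v i = u i.1.1 then q h.choose else 0

/-- A coupling of a pair of distributions on `O`, presented as a two-variable function. -/
def IsCoupling2 {O : Type} [Fintype O] (q : O → O → ℝ) (p₁ p₂ : O → ℝ) : Prop :=
  (∀ o o', 0 ≤ q o o') ∧ (∑ o : O, ∑ o' : O, q o o' = 1) ∧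
  (∀ o : O, ∑ o' : O, q o o' = p₁ o) ∧ (∀ o' : O, ∑ o : O, q o o' = p₂ o')

/-- The distribution `p^C(s) = p_a(s(a))·f(s(b), s(c))` on the context `C = {a,b,c}`. -/
def behC {X O : Type} [DecidableEq X] (a b c : X) (pa : O → ℝ) (f : O → O → ℝ) :
    (↥({a, b, c} : Finset X) → O) → ℝ :=
  fun s => pa (s ⟨a, by simp⟩) * f (s ⟨b, by simp⟩) (s ⟨c, by simp⟩)

/-- The distribution `p^D(t) = g(t(b), t(c))·p_d(t(d))` on the context `D = {b,c,d}`. -/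
def behD {X O : Type} [DecidableEq X] (b c d : X) (pd : O → ℝ) (g : O → O → ℝ) :
    (↥({b, c, d} : Finset X) → O) → ℝ :=
  fun t => g (t ⟨b, by simp⟩) (t ⟨c, by simp⟩) * pd (t ⟨d, by simp⟩)

theorem sum_three_helper {X O : Type} [DecidableEq X] [Fintype O] (x y z : X)
    (hxy : x ≠ y) (hxz : x ≠ z) (hyz : y ≠ z)
    (hx : x ∈ ({x, y, z} : Finset X)) (hy : y ∈ ({x, y, z} : Finset X))
    (hz : z ∈ ({x, y, z} : Finset X)) (G : O → O → O → ℝ) :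
    ∑ v : ↥({x, y, z} : Finset X) → O, G (v ⟨x, hx⟩) (v ⟨y, hy⟩) (v ⟨z, hz⟩)
      = ∑ i, ∑ j, ∑ k, G i j k := by
  let e : (↥({x, y, z} : Finset X) → O) ≃ O × O × O :=
    { toFun := fun v => (v ⟨x, hx⟩, v ⟨y, hy⟩, v ⟨z, hz⟩)
      invFun := fun t w => if w.1 = x then t.1 else if w.1 = y then t.2.1 else t.2.2
      left_inv := by
        intro v
        funext ⟨w, hw⟩
        have h := hw
        simp only [Finset.mem_insert, Finset.mem_singleton] at h
        rcases h with rfl | rfl | rfl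
        · simp
        · simp [hxy.symm]
        · simp [hxz.symm, hyz.symm]
      right_inv := by
        rintro ⟨i, j, k⟩
        simp [hxy.symm, hxz.symm, hyz.symm] }
  rw [← Fintype.sum_equiv e.symm (fun t => G t.1 t.2.1 t.2.2)]
  · simp only [Fintype.sum_prod_type]
  · intro t
    obtain ⟨v, rfl⟩ := e.surjective t
    simp only [Equiv.symm_apply_apply]
    rfl

/-- Non-degenerate behaviours need not be non-disturbing. With
`X = {a,b,c,d}`, contexts `C = {a,b,c}`, `D = {b,c,d}`, distributions
`p_a, p_b, p_c, p_d` on `O` and two distinct couplings `f ≠ g` of `(p_b, p_c)`,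
the behaviour `p^C(s) = p_a(s(a))·f(s(b),s(c))`, `p^D(t) = g(t(b),t(c))·p_d(t(d))`
is a behaviour, is non-degenerate (`p^C_b = p_b = p^D_b`, `p^C_c = p_c = p^D_c`,
`p^C_a = p_a`, `p^D_d = p_d`), but is disturbing: `p^C_{C∩D} = f ≠ g = p^D_{C∩D}`. -/
theorem nonDegenerate_not_nonDisturbing
    {X O : Type} [DecidableEq X] [Fintype O] [DecidableEq O]
    (a b c d : X) (hab : a ≠ b) (hac : a ≠ c) (had : a ≠ d)
    (hbc : b ≠ c) (hbd : b ≠ d) (hcd : c ≠ d)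
    (pa pb pc pd : O → ℝ)
    (hpa : IsDist pa) (hpb : IsDist pb) (hpc : IsDist pc) (hpd : IsDist pd)
    (f g : O → O → ℝ)
    (hf : IsCoupling2 f pb pc) (hg : IsCoupling2 g pb pc) (hfg : f ≠ g) :
    -- p is a behaviour:
    (IsDist (behC a b c pa f) ∧ IsDist (behD b c d pd g)) ∧
    -- p is non-degenerate:
    (coordMarg (behC a b c pa f) ⟨a, by simp⟩ = pa ∧
     coordMarg (behC a b c pa f) ⟨b, by simp⟩ = pb ∧
     coordMarg (behC a b c pa f) ⟨c, by simp⟩ = pc ∧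
     coordMarg (behD b c d pd g) ⟨b, by simp⟩ = pb ∧
     coordMarg (behD b c d pd g) ⟨c, by simp⟩ = pc ∧
     coordMarg (behD b c d pd g) ⟨d, by simp⟩ = pd) ∧
    -- the marginal of p^C on C ∩ D is f, that of p^D is g:
    (∀ t : ↥(({a, b, c} : Finset X) ∩ ({b, c, d} : Finset X)) → O,
      marg {a, b, c} (({a, b, c} : Finset X) ∩ ({b, c, d} : Finset X))
          Finset.inter_subset_left (behC a b c pa f) t
        = f (t ⟨b, by simp⟩) (t ⟨c, by simp⟩)) ∧
    (∀ t : ↥(({a, b, c} : Finset X) ∩ ({b, c, d} : Finset X)) → O,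
      marg {b, c, d} (({a, b, c} : Finset X) ∩ ({b, c, d} : Finset X))
          Finset.inter_subset_right (behD b c d pd g) t
        = g (t ⟨b, by simp⟩) (t ⟨c, by simp⟩)) ∧
    -- hence p is disturbing:
    marg {a, b, c} (({a, b, c} : Finset X) ∩ ({b, c, d} : Finset X))
        Finset.inter_subset_left (behC a b c pa f)
      ≠ marg {b, c, d} (({a, b, c} : Finset X) ∩ ({b, c, d} : Finset X))
        Finset.inter_subset_right (behD b c d pd g) := by
  obtain ⟨hpa0, hpa1⟩ := hpa
  obtain ⟨hpd0, hpd1⟩ := hpd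
  obtain ⟨hf0, hf1, hf2, hf3⟩ := hf
  obtain ⟨hg0, hg1, hg2, hg3⟩ := hg
  have SC := fun G : O → O → O → ℝ => sum_three_helper a b c hab hac hbc
    (by simp) (by simp) (by simp) G
  have SD := fun G : O → O → O → ℝ => sum_three_helper b c d hbc hbd hcd
    (by simp) (by simp) (by simp) G
  have M1 : ∀ t : ↥(({a, b, c} : Finset X) ∩ ({b, c, d} : Finset X)) → O,
      marg {a, b, c} (({a, b, c} : Finset X) ∩ ({b, c, d} : Finset X))
          Finset.inter_subset_left (behC a b c pa f) t
        = f (t ⟨b, by simp⟩) (t ⟨c, by simp⟩) := by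
    intro t
    have key : ∀ v : ↥({a, b, c} : Finset X) → O,
        (∀ j : ↥(({a, b, c} : Finset X) ∩ ({b, c, d} : Finset X)),
          v ⟨j.1, Finset.inter_subset_left j.2⟩ = t j) ↔
        (v ⟨b, by simp⟩ = t ⟨b, by simp⟩ ∧ v ⟨c, by simp⟩ = t ⟨c, by simp⟩) := by
      intro v
      constructor
      · intro h
        exact ⟨h ⟨b, by simp⟩, h ⟨c, by simp⟩⟩
      · rintro ⟨h1, h2⟩ ⟨w, hw⟩
        have h := hw
        simp only [Finset.mem_inter, Finset.mem_insert, Finset.mem_singleton] at h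
        have h' : w = b ∨ w = c := by grind
        rcases h' with rfl | rfl
        · exact h1
        · exact h2
    simp only [marg, margAlong, behC, key]
    rw [SC (fun i j k => if j = t ⟨b, by simp⟩ ∧ k = t ⟨c, by simp⟩ then pa i * f j k else 0)]
    simp [ite_and, ← Finset.sum_mul, hpa1]
  have M2 : ∀ t : ↥(({a, b, c} : Finset X) ∩ ({b, c, d} : Finset X)) → O,
      marg {b, c, d} (({a, b, c} : Finset X) ∩ ({b, c, d} : Finset X))
          Finset.inter_subset_right (behD b c d pd g) t
        = g (t ⟨b, by simp⟩) (t ⟨c, by simp⟩) := by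
    intro t
    have key : ∀ v : ↥({b, c, d} : Finset X) → O,
        (∀ j : ↥(({a, b, c} : Finset X) ∩ ({b, c, d} : Finset X)),
          v ⟨j.1, Finset.inter_subset_right j.2⟩ = t j) ↔
        (v ⟨b, by simp⟩ = t ⟨b, by simp⟩ ∧ v ⟨c, by simp⟩ = t ⟨c, by simp⟩) := by
      intro v
      constructor
      · intro h
        exact ⟨h ⟨b, by simp⟩, h ⟨c, by simp⟩⟩
      · rintro ⟨h1, h2⟩ ⟨w, hw⟩
        have h := hw
        simp only [Finset.mem_inter, Finset.mem_insert, Finset.mem_singleton] at h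
        have h' : w = b ∨ w = c := by grind
        rcases h' with rfl | rfl
        · exact h1
        · exact h2
    simp only [marg, margAlong, behD, key]
    rw [SD (fun i j k => if i = t ⟨b, by simp⟩ ∧ j = t ⟨c, by simp⟩ then g i j * pd k else 0)]
    simp only [ite_and]
    simp [Finset.sum_ite_irrel, ← Finset.mul_sum, hpd1]
  refine ⟨⟨⟨fun s => mul_nonneg (hpa0 _) (hf0 _ _), ?_⟩,
    ⟨fun s => mul_nonneg (hg0 _ _) (hpd0 _), ?_⟩⟩, ⟨?_, ?_, ?_, ?_, ?_, ?_⟩, M1, M2, ?_⟩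
  · simp only [behC]
    rw [SC (fun i j k => pa i * f j k)]
    simp [← Finset.mul_sum, hf1, hpa1]
  · simp only [behD]
    rw [SD (fun i j k => g i j * pd k)]
    simp [← Finset.mul_sum, hg1, hpd1]
  · funext o
    simp only [coordMarg, behC]
    rw [SC (fun i j k => if i = o then pa i * f j k else 0)]
    simp [Finset.sum_ite_irrel, ← Finset.mul_sum, hf1]
  · funext o
    simp only [coordMarg, behC]
    rw [SC (fun i j k => if j = o then pa i * f j k else 0)]
    simp [Finset.sum_ite_irrel, ← Finset.mul_sum, ← Finset.sum_mul, hf2, hpa1]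
  · funext o
    simp only [coordMarg, behC]
    rw [SC (fun i j k => if k = o then pa i * f j k else 0)]
    simp [← Finset.mul_sum, ← Finset.sum_mul, hf3, hpa1]
  · funext o
    simp only [coordMarg, behD]
    rw [SD (fun i j k => if i = o then g i j * pd k else 0)]
    simp [Finset.sum_ite_irrel, ← Finset.mul_sum, hg2, hpd1]
  · funext o
    simp only [coordMarg, behD]
    rw [SD (fun i j k => if j = o then g i j * pd k else 0)]
    simp [Finset.sum_ite_irrel, ← Finset.mul_sum, hg3, hpd1]
  · funext o
    simp only [coordMarg, behD]
    rw [SD (fun i j k => if k = o then g i j * pd k else 0)]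
    simp [← Finset.sum_mul, hg1]
  · intro h
    apply hfg
    funext o o'
    have ht := congrFun h (fun w => if w.1 = b then o else o')
    rw [M1, M2] at ht
    simpa [hbc.symm] using ht
end

section
/- A behaviour p in a scenario S = (X, C, O) is non-contextual in the standard sense if and only if p is non-degenerate and non-contextual in the extended sense. -/
theorem margAlong_comp {O I J K : Type} [Fintype O] [DecidableEq O] [Fintype I] [DecidableEq I]
    [Fintype J] [DecidableEq J] [Fintype K] (f : J → I) (e : K → J) (q : (I → O) → ℝ) :
    margAlong e (margAlong f q) = margAlong (fun k => f (e k)) q := by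
  funext t
  unfold margAlong
  simp only [← Finset.sum_filter]
  rw [Finset.sum_comm' (s' := fun v => Finset.univ.filter fun w : J → O => (∀ k, w (e k) = t k) ∧ w = fun j => v (f j))
    (t' := Finset.univ.filter fun v : I → O => ∀ k, v (f (e k)) = t k)]
  · refine Finset.sum_congr rfl fun v hv => ?_
    have hv' := (Finset.mem_filter.mp hv).2
    have : (Finset.univ.filter fun w : J → O => (∀ k, w (e k) = t k) ∧ w = fun j => v (f j))
        = {fun j => v (f j)} := by
      ext w
      simp only [Finset.mem_filter, Finset.mem_univ, true_and, Finset.mem_singleton]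
      constructor
      · exact fun h => h.2
      · rintro rfl
        exact ⟨hv', rfl⟩
    rw [this, Finset.sum_singleton]
  · intro w v
    simp only [Finset.mem_filter, Finset.mem_univ, true_and]
    constructor
    · rintro ⟨h1, h2⟩
      exact ⟨⟨h1, funext fun j => (h2 j).symm⟩, fun k => (h2 _).trans (h1 k)⟩
    · rintro ⟨⟨h1, rfl⟩, -⟩
      exact ⟨h1, fun _ => rfl⟩

theorem coordMarg_eq {O I : Type} [Fintype O] [DecidableEq O] [Fintype I] [DecidableEq I]
    (q : (I → O) → ℝ) (i : I) (o : O) :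
    coordMarg q i o = margAlong (fun _ : Unit => i) q (fun _ => o) := by
  simp [coordMarg, margAlong]

theorem coordMarg_margAlong {O I J : Type} [Fintype O] [DecidableEq O] [Fintype I] [DecidableEq I]
    [Fintype J] [DecidableEq J] (f : J → I) (q : (I → O) → ℝ) (j : J) :
    coordMarg (margAlong f q) j = coordMarg q (f j) := by
  funext o
  rw [coordMarg_eq, margAlong_comp, coordMarg_eq]

theorem isDist_margAlong {O I J : Type} [Fintype O] [DecidableEq O] [Fintype I] [DecidableEq I]
    [Fintype J] [DecidableEq J] (f : J → I) (q : (I → O) → ℝ) (h : IsDist q) :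
    IsDist (margAlong f q) := by
  constructor
  · intro t
    exact Finset.sum_nonneg fun v _ => by split_ifs <;> [exact h.1 v; exact le_rfl]
  · rw [← h.2]
    unfold margAlong
    rw [Finset.sum_comm]
    refine Finset.sum_congr rfl fun v _ => ?_
    rw [Finset.sum_eq_single (fun j => v (f j))]
    · simp
    · intro t _ ht
      rw [if_neg]
      exact fun h => ht (funext fun j => (h j).symm)
    · simp

theorem diag_eq {O J : Type} [Fintype O] [DecidableEq O] [Fintype J] [DecidableEq J] [Nonempty J]
    (r : (J → O) → ℝ) :
    diagWeight r = ∑ t ∈ Finset.univ.image (fun (o : O) (_ : J) => o), r t := by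
  rw [Finset.sum_image]
  · rfl
  · intro a _ b _ h
    exact congrFun h (Classical.arbitrary J)

theorem diag_le_one {O J : Type} [Fintype O] [DecidableEq O] [Fintype J] [DecidableEq J]
    [Nonempty J] (r : (J → O) → ℝ) (h : IsDist r) : diagWeight r ≤ 1 := by
  rw [diag_eq, ← h.2]
  exact Finset.sum_le_sum_of_subset_of_nonneg (Finset.subset_univ _) fun t _ _ => h.1 t

theorem const_of_diag {O J : Type} [Fintype O] [DecidableEq O] [Fintype J] [DecidableEq J]
    [Nonempty J] (r : (J → O) → ℝ) (h : IsDist r) (hd : 1 ≤ diagWeight r) (t : J → O)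
    (ht : r t ≠ 0) : ∃ o, t = fun _ => o := by
  by_contra hc
  have hn : t ∉ Finset.univ.image (fun (o : O) (_ : J) => o) := by
    intro hm
    obtain ⟨o, -, ho⟩ := Finset.mem_image.mp hm
    exact hc ⟨o, ho.symm⟩
  have h1 : ∑ t' ∈ insert t (Finset.univ.image (fun (o : O) (_ : J) => o)), r t' ≤ 1 := by
    rw [← h.2]
    exact Finset.sum_le_sum_of_subset_of_nonneg (Finset.subset_univ _) fun t _ _ => h.1 t
  rw [Finset.sum_insert hn, ← diag_eq] at h1
  have := lt_of_le_of_ne (h.1 t) (Ne.symm ht)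
  linarith

theorem diag_const {O I J : Type} [Fintype O] [DecidableEq O] [Fintype I] [DecidableEq I]
    [Fintype J] [DecidableEq J] [Nonempty J] (i : I) (q : (I → O) → ℝ) (h : IsDist q) :
    diagWeight (margAlong (fun _ : J => i) q) = 1 := by
  rw [← h.2]
  unfold diagWeight margAlong
  rw [Finset.sum_comm]
  refine Finset.sum_congr rfl fun v _ => ?_
  simp

/-- A behaviour `p` in a scenario `S = (X, 𝒞, O)` is non-contextual in
the standard sense iff it is non-degenerate and non-contextual in the extended sense. -/
theorem standardNC_iff_nonDegenerate_and_extNC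
    {X O : Type} [Fintype X] [DecidableEq X] [Fintype O] [DecidableEq O]
    (𝒞 : Finset (Finset X))
    (hcover : ∀ x : X, ∃ C ∈ 𝒞, x ∈ C)
    (hanti : ∀ C ∈ 𝒞, ∀ C' ∈ 𝒞, C' ⊆ C → C' = C)
    (p : ∀ C : Finset X, (↥C → O) → ℝ)
    (hdist : ∀ C ∈ 𝒞, IsDist (p C)) :
    (∃ q : (X → O) → ℝ, IsGlobalSection 𝒞 p q) ↔ (NonDeg 𝒞 p ∧ ExtNC 𝒞 p) := by
  constructor
  · rintro ⟨q, hq, hp⟩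
    have hm : ∀ (C : Finset X), C ∈ 𝒞 → ∀ (x : X) (hx : x ∈ C),
        coordMarg (p C) ⟨x, hx⟩ = coordMarg q x := by
      intro C hC x hx
      rw [hp C hC, coordMarg_margAlong]
    refine ⟨?_, margAlong (fun i : XT 𝒞 => i.1.1) q, ⟨isDist_margAlong _ _ hq, ?_⟩, ?_, ?_⟩
    · intro x C D hC hD hxC hxD
      rw [hm C hC, hm D hD]
    · intro i
      rw [coordMarg_margAlong]
      exact (hm i.1.2 i.2.1 i.1.1 i.2.2).symm
    · intro C hC
      rw [margAlong_comp, hp C hC]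
      rfl
    · intro x
      have hne : Nonempty ↥(Cx 𝒞 x) := by
        obtain ⟨C, hC, hx⟩ := hcover x
        exact ⟨⟨C, Finset.mem_filter.mpr ⟨hC, hx⟩⟩⟩
      rw [margAlong_comp]
      refine ⟨⟨isDist_margAlong _ _ hq, ?_⟩, ?_⟩
      · intro C
        rw [coordMarg_margAlong]
        exact (hm C.1 (Finset.mem_filter.mp C.2).1 x (Finset.mem_filter.mp C.2).2).symm
      · intro q' hq'
        have h1 : diagWeight (margAlong (fun _ : ↥(Cx 𝒞 x) => x) q) = 1 := diag_const x q hq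
        exact (diag_le_one q' hq'.1).trans h1.ge
  · rintro ⟨hnd, Q, hQ, hQC, hQx⟩
    choose D hD hxD using hcover
    have hsupp : ∀ v : XT 𝒞 → O, Q v ≠ 0 → ∀ (x : X) (C : Finset X) (hC : C ∈ 𝒞) (hx : x ∈ C),
        v ⟨(x, C), hC, hx⟩ = v ⟨(x, D x), hD x, hxD x⟩ := by
      intro v hv x C hC hx
      have hne : Nonempty ↥(Cx 𝒞 x) := ⟨⟨C, Finset.mem_filter.mpr ⟨hC, hx⟩⟩⟩
      obtain ⟨hcoup, hmax⟩ := hQx x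
      have h1 := hmax (margAlong (fun _ : ↥(Cx 𝒞 x) => (⟨x, hxD x⟩ : ↥(D x))) (p (D x)))
        ⟨isDist_margAlong _ _ (hdist _ (hD x)), fun E => by
          rw [coordMarg_margAlong]
          exact hnd x _ _ (hD x) (Finset.mem_filter.mp E.2).1 _ _⟩
      rw [diag_const _ _ (hdist _ (hD x))] at h1
      have h2 : margAlong (eT 𝒞 x) Q (fun E => v (eT 𝒞 x E)) ≠ 0 := by
        have hle : Q v ≤ margAlong (eT 𝒞 x) Q (fun E => v (eT 𝒞 x E)) := by
          have := Finset.single_le_sum (s := Finset.univ)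
            (f := fun w : XT 𝒞 → O =>
              if ∀ E, w (eT 𝒞 x E) = v (eT 𝒞 x E) then Q w else 0)
            (fun w _ => by
              split_ifs
              · exact hQ.1.1 w
              · exact le_rfl) (Finset.mem_univ v)
          simpa [margAlong] using this
        exact ((lt_of_le_of_ne (hQ.1.1 v) (Ne.symm hv)).trans_le hle).ne'
      obtain ⟨o, ho⟩ := const_of_diag _ hcoup.1 h1 _ h2
      exact (congrFun ho ⟨C, Finset.mem_filter.mpr ⟨hC, hx⟩⟩).trans
        (congrFun ho ⟨D x, Finset.mem_filter.mpr ⟨hD x, hxD x⟩⟩).symm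
    refine ⟨margAlong (fun x : X => (⟨(x, D x), hD x, hxD x⟩ : XT 𝒞)) Q,
      isDist_margAlong _ _ hQ.1, ?_⟩
    intro C hC
    rw [margAlong_comp, ← hQC C hC]
    funext t
    unfold margAlong
    refine Finset.sum_congr rfl fun v _ => ?_
    by_cases hv : Q v = 0
    · simp [hv]
    · refine if_congr (forall_congr' fun j => ?_) rfl rfl
      rw [← hsupp v hv j.1 C hC j.2]
      rfl
end

section
/- Let p be a non-degenerate behaviour in a scenario S = (X, C, O), and let f be a coupling on O^{X̃} of the family (p^C_x)_{(x,C)∈X̃} such that for every x ∈ X the marginal f_{T(x)} is a maximal coupling of the family (p^C_x)_{C∈C_x}. Then f(v) = 0 for every v ∈ O^{X̃} that is not of the form ũ for some u ∈ O^X (where ũ(x_C) = u(x)), and consequently f is the trivial extension of a unique probability distribution q on O^X; moreover, if additionally the marginal of f on each C̃ equals p^C, then q is a global section of p, so p is non-contextual in the standard sense. -/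
theorem maxCoupling_eq_zero {O J : Type} [Fintype O] [DecidableEq O] [Fintype J] [DecidableEq J]
    (q : (J → O) → ℝ) (r : J → O → ℝ) (hq : IsMaxCoupling q r) (j0 : J)
    (hr : ∀ j, r j = r j0) (t : J → O) (ht : ∀ o, t ≠ fun _ => o) : q t = 0 := by
  obtain ⟨⟨⟨hq0, hq1⟩, hqm⟩, hmx⟩ := hq
  have hr0 : ∀ o, 0 ≤ r j0 o := by
    intro o
    rw [← hqm j0]
    unfold coordMarg
    exact Finset.sum_nonneg (fun v _ => by split_ifs <;> simp [hq0])
  have hr1 : ∑ o, r j0 o = 1 := by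
    rw [← hqm j0]
    unfold coordMarg
    rw [Finset.sum_comm]
    simpa using hq1
  have hinj : Function.Injective (fun (o : O) (_ : J) => o) := fun a b h => congrFun h j0
  let q' : (J → O) → ℝ := fun t => ∑ o, if t = (fun _ => o) then r j0 o else 0
  have hc : IsCoupling q' r := by
    refine ⟨⟨?_, ?_⟩, ?_⟩
    · intro t
      exact Finset.sum_nonneg (fun v _ => by split_ifs <;> simp [hr0])
    · simp only [q']
      rw [Finset.sum_comm]
      simpa using hr1
    · intro j
      rw [hr j]
      funext o
      have : ∀ v : J → O, (if v j = o then q' v else 0)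
          = ∑ o', if v = (fun _ => o') then (if o' = o then r j0 o' else 0) else 0 := by
        intro v
        by_cases h : v j = o
        · simp only [h, if_true, q']
          refine Finset.sum_congr rfl fun o' _ => ?_
          by_cases h' : v = fun _ => o'
          · have : o' = o := by rw [← h, h']
            simp [h', this]
          · simp [h']
        · simp only [h, if_false]
          symm
          refine Finset.sum_eq_zero fun o' _ => ?_
          by_cases h' : v = fun _ => o'
          · have : o' ≠ o := by rintro rfl; exact h (by rw [h'])
            simp [this]
          · simp [h']
      unfold coordMarg
      simp only [this]
      rw [Finset.sum_comm]
      simp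
  have hd : diagWeight q' = 1 := by
    rw [← hr1]
    unfold diagWeight
    refine Finset.sum_congr rfl fun o _ => ?_
    simp only [q']
    rw [Finset.sum_eq_single o]
    · simp
    · intro b _ hb
      rw [if_neg]
      intro h
      exact hb (congrFun h j0).symm
    · simp
  have h1 := hmx q' hc
  rw [hd] at h1
  have himg : diagWeight q = ∑ t ∈ Finset.univ.image (fun (o : O) (_ : J) => o), q t := by
    rw [Finset.sum_image (fun a _ b _ h => hinj h)]
    rfl
  have hnot : t ∉ Finset.univ.image (fun (o : O) (_ : J) => o) := by
    simp only [Finset.mem_image, Finset.mem_univ, true_and, not_exists]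
    intro o h
    exact ht o h.symm
  have h2 : ∑ t' ∈ insert t (Finset.univ.image (fun (o : O) (_ : J) => o)), q t' ≤ ∑ t', q t' :=
    Finset.sum_le_sum_of_subset_of_nonneg (Finset.subset_univ _) (fun i _ _ => hq0 i)
  rw [Finset.sum_insert hnot, ← himg, hq1] at h2
  linarith [hq0 t]

theorem trivExt_tilde {X O : Type} [Fintype X] [DecidableEq X] [Fintype O] [DecidableEq O]
    (𝒞 : Finset (Finset X)) (hcover : ∀ x : X, ∃ C ∈ 𝒞, x ∈ C)
    (q : (X → O) → ℝ) (u : X → O) : trivExt 𝒞 q (fun i => u i.1.1) = q u := by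
  unfold trivExt
  have h : ∃ u' : X → O, ∀ i : XT 𝒞, u i.1.1 = u' i.1.1 := ⟨u, fun _ => rfl⟩
  rw [dif_pos h]
  congr 1
  funext x
  obtain ⟨C, hC, hx⟩ := hcover x
  exact (h.choose_spec ⟨(x, C), hC, hx⟩).symm

/-- If `p` is non-degenerate and `f` is a coupling of the family
`(p^C_x)_{(x,C) ∈ X̃}` whose marginal on each `T(x)` is a maximal coupling of
`(p^C_x)_{C ∈ 𝒞_x}`, then `f` vanishes outside the "diagonal copy" of `O^X` in
`O^{X̃}`, is the trivial extension of a unique probability distribution `q` on `O^X`,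
and if moreover the marginal of `f` on each `C̃` equals `p^C` then any such `q` is a
global section of `p` (so `p` is standard-noncontextual). -/
theorem coupling_of_nonDegenerate_is_trivExt
    {X O : Type} [Fintype X] [DecidableEq X] [Fintype O] [DecidableEq O]
    (𝒞 : Finset (Finset X))
    (hcover : ∀ x : X, ∃ C ∈ 𝒞, x ∈ C)
    (hanti : ∀ C ∈ 𝒞, ∀ C' ∈ 𝒞, C' ⊆ C → C' = C)
    (p : ∀ C : Finset X, (↥C → O) → ℝ)
    (hdist : ∀ C ∈ 𝒞, IsDist (p C))
    (hndg : NonDeg 𝒞 p)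
    (f : (XT 𝒞 → O) → ℝ)
    (hcoup : IsCoupling f (fun i : XT 𝒞 => coordMarg (p i.1.2) ⟨i.1.1, i.2.2⟩))
    (hmax : ∀ x : X, IsMaxCoupling (margAlong (eT 𝒞 x) f) (famAt 𝒞 p x)) :
    (∀ v : XT 𝒞 → O, (¬ ∃ u : X → O, ∀ i : XT 𝒞, v i = u i.1.1) → f v = 0) ∧
    (∃! q : (X → O) → ℝ, IsDist q ∧ f = trivExt 𝒞 q) ∧
    ((∀ (C : Finset X) (hC : C ∈ 𝒞), margAlong (eC 𝒞 C hC) f = p C) →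
      ∀ q : (X → O) → ℝ, IsDist q ∧ f = trivExt 𝒞 q → IsGlobalSection 𝒞 p q) := by
  classical
  obtain ⟨⟨hf0, hf1⟩, -⟩ := hcoup
  have key : ∀ v : XT 𝒞 → O, (¬ ∃ u : X → O, ∀ i : XT 𝒞, v i = u i.1.1) → f v = 0 := by
    intro v hv
    choose D hD hxD using hcover
    have : ∃ x, ∀ o, (fun j => v (eT 𝒞 x j)) ≠ fun _ => o := by
      by_contra hcon
      push Not at hcon
      choose u hu using hcon
      refine hv ⟨u, fun i => ?_⟩
      exact congrFun (hu i.1.1) ⟨i.1.2, Finset.mem_filter.mpr i.2⟩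
    obtain ⟨x, hx⟩ := this
    have h0 := maxCoupling_eq_zero _ _ (hmax x) ⟨D x, Finset.mem_filter.mpr ⟨hD x, hxD x⟩⟩
      (fun j => hndg x _ _ (Finset.mem_filter.mp j.2).1 (hD x) _ _) _ hx
    unfold margAlong at h0
    rw [Finset.sum_eq_zero_iff_of_nonneg (fun v _ => by split_ifs <;> simp [hf0])] at h0
    simpa using h0 v (Finset.mem_univ _)
  have hinj : Function.Injective (fun (u : X → O) (i : XT 𝒞) => u i.1.1) := by
    intro u u' h
    funext x
    obtain ⟨C, hC, hx⟩ := hcover x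
    exact congrFun h ⟨(x, C), hC, hx⟩
  have hrange : ∀ v : XT 𝒞 → O, v ∉ Set.range (fun (u : X → O) (i : XT 𝒞) => u i.1.1) →
      f v = 0 := by
    intro v hv
    refine key v ?_
    rintro ⟨u, hu⟩
    exact hv ⟨u, (funext hu).symm⟩
  refine ⟨key, ⟨fun u => f (fun i => u i.1.1), ⟨⟨fun u => hf0 _, ?_⟩, ?_⟩, ?_⟩, ?_⟩
  · rw [← hf1]
    exact Fintype.sum_of_injective _ hinj _ _ hrange (fun _ => rfl)
  · funext v
    by_cases h : ∃ u : X → O, ∀ i : XT 𝒞, v i = u i.1.1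
    · obtain ⟨u, hu⟩ := h
      obtain rfl : v = fun i => u i.1.1 := funext hu
      rw [trivExt_tilde 𝒞 hcover]
    · rw [key v h]
      unfold trivExt
      rw [dif_neg h]
  · rintro q ⟨-, hq⟩
    funext u
    rw [hq, trivExt_tilde 𝒞 hcover]
  · rintro hm q ⟨hqd, hq⟩
    refine ⟨hqd, fun C hC => ?_⟩
    rw [← hm C hC]
    funext t
    unfold margAlong
    symm
    refine Fintype.sum_of_injective _ hinj _ _ ?_ ?_
    · intro v hv
      rw [hrange v hv, ite_self]
    · intro u
      have : f (fun i => u i.1.1) = q u := by rw [hq, trivExt_tilde 𝒞 hcover]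
      simp only [this, eC]
end
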